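/- Let b ∈ (0,1] and suppose the bipolar max-product fuzzy relation equation max_{j=1..m} max(a_j^+ · x_j, a_j^- · n_P(x_j)) = b is solvable. If a_j^- ≠ b for each j ∈ {1,...,m}, then the set of minimal solutions of the equation is exactly the finite set of tuples (0,...,0, x_k, 0,...,0) with x_k = b ←_P a_k^+ in position k, for k ranging over K_P^+ = {k ∈ {1,...,m} : a_k^+ ≥ b and a_j^- < b for each j ≠ k}. -/

import Mathlib

open Finset
open scoped Classical

/-- Product negation: `nP 0 = 1`, `nP x = 0` for `x ≠ 0`. -/
noncomputable def nP (x : ℝ) : ℝ := if x = 0 then 1 else 0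

/-- Residuated implication of the product: `resP z x = min 1 (z / x)` for `x > 0`,
and `resP z 0 = 1`. -/
noncomputable def resP (z x : ℝ) : ℝ := if x = 0 then 1 else min 1 (z / x)

/-- Left-hand side of a bipolar max-product fuzzy relation equation:
`max_{j=1..m} max (a_j^+ * x_j) (a_j^- * nP (x_j))`. -/
noncomputable def eqLHS {m : ℕ} (hm : 0 < m) (ap an : Fin m → ℝ) (x : Fin m → ℝ) : ℝ :=
  Finset.univ.sup' ⟨⟨0, hm⟩, Finset.mem_univ _⟩
    (fun j => max (ap j * x j) (an j * nP (x j)))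

/-- `x` is a solution of the bipolar max-product FRE with independent term `b`. -/
def IsSol {m : ℕ} (hm : 0 < m) (ap an : Fin m → ℝ) (b : ℝ) (x : Fin m → ℝ) : Prop :=
  (∀ j, x j ∈ Set.Icc (0:ℝ) 1) ∧ eqLHS hm ap an x = b

/-!
For `b > 0`, a solution `x` reaches `b` either at a positive term `ap k * x k` or at a negative term
`an k * nP (x k)`; a nonzero negative term is `an k` itself, so if no `an j` equals `b`, some
positive term is equal to `b`, and this forces `x k = resP b (ap k)`. Any other nonzero entry can be
decreased to a smaller positive value: its positive term remains at most `b` and its negative term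
remains zero. Hence a minimal solution vanishes outside `k`. Conversely, a solution below a tuple
supported at `k` vanishes outside `k`, so it reaches `b` at `k` and its entry there is
`resP b (ap k)`.
-/

lemma nP_zero : nP 0 = 1 := if_pos rfl

lemma nP_of_ne_zero {x : ℝ} (hx : x ≠ 0) : nP x = 0 := if_neg hx

lemma resP_nonneg {z x : ℝ} (hz : 0 ≤ z) (hx : 0 ≤ x) : 0 ≤ resP z x := by
  unfold resP
  split_ifs
  · exact zero_le_one
  · exact le_min zero_le_one (div_nonneg hz hx)

lemma resP_le_one (z x : ℝ) : resP z x ≤ 1 := by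
  unfold resP
  split_ifs
  · exact le_rfl
  · exact min_le_left _ _

lemma resP_of_le {b a : ℝ} (ha : 0 < a) (hba : b ≤ a) : resP b a = b / a := by
  rw [resP, if_neg ha.ne', min_eq_right ((div_le_one ha).2 hba)]

lemma mul_resP_of_le {b a : ℝ} (ha : 0 < a) (hba : b ≤ a) : a * resP b a = b := by
  rw [resP_of_le ha hba, mul_div_cancel₀ b ha.ne']

lemma le_of_mul_eq_of_mem_Icc {a b x : ℝ} (hb : 0 < b) (hx : x ∈ Set.Icc (0 : ℝ) 1)
    (h : a * x = b) : b ≤ a := by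
  have ha : 0 < a := pos_of_mul_pos_left (h ▸ hb) hx.1
  exact h ▸ mul_le_of_le_one_right ha.le hx.2

lemma eq_resP_of_mul_eq {a b x : ℝ} (hb : 0 < b) (hx : x ∈ Set.Icc (0 : ℝ) 1)
    (h : a * x = b) : x = resP b a := by
  have hba : b ≤ a := le_of_mul_eq_of_mem_Icc hb hx h
  have ha : 0 < a := hb.trans_le hba
  rw [resP_of_le ha hba, eq_div_iff ha.ne', mul_comm, h]

section Equation

variable {m : ℕ} {hm : 0 < m} {ap an x : Fin m → ℝ} {b : ℝ} {k : Fin m}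

lemma eqLHS_le_iff :
    eqLHS hm ap an x ≤ b ↔ ∀ j, ap j * x j ≤ b ∧ an j * nP (x j) ≤ b :=
  (sup'_le_iff _ _).trans <| by simp only [mem_univ, max_le_iff, forall_const]

lemma exists_eqLHS_eq :
    ∃ k, eqLHS hm ap an x = ap k * x k ∨ eqLHS hm ap an x = an k * nP (x k) := by
  obtain ⟨k, -, hk⟩ := exists_mem_eq_sup' ⟨⟨0, hm⟩, mem_univ _⟩
    (fun j => max (ap j * x j) (an j * nP (x j)))
  exact ⟨k, (max_choice _ _).imp hk.trans hk.trans⟩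

lemma isSol_of_mul_eq (hx : ∀ j, x j ∈ Set.Icc (0 : ℝ) 1)
    (hle : ∀ j, ap j * x j ≤ b ∧ an j * nP (x j) ≤ b) (hk : ap k * x k = b) :
    IsSol hm ap an b x :=
  ⟨hx, (eqLHS_le_iff.2 hle).antisymm (hk ▸ (eqLHS_le_iff.1 le_rfl k).1)⟩

namespace IsSol

lemma mul_le (hx : IsSol hm ap an b x) (j : Fin m) : ap j * x j ≤ b :=
  (eqLHS_le_iff.1 hx.2.le j).1

lemma mul_nP_le (hx : IsSol hm ap an b x) (j : Fin m) : an j * nP (x j) ≤ b :=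
  (eqLHS_le_iff.1 hx.2.le j).2

lemma exists_mul_eq (hx : IsSol hm ap an b x) (hb : b ≠ 0) (hne : ∀ j, an j ≠ b) :
    ∃ k, ap k * x k = b := by
  obtain ⟨k, hk⟩ := exists_eqLHS_eq (hm := hm) (ap := ap) (an := an) (x := x)
  rw [hx.2] at hk
  refine ⟨k, hk.elim Eq.symm fun hneg => ?_⟩
  by_cases h0 : x k = 0
  · rw [h0, nP_zero, mul_one] at hneg
    exact absurd hneg.symm (hne k)
  · rw [nP_of_ne_zero h0, mul_zero] at hneg
    exact absurd hneg hb

lemma update_of_pos_of_le (hx : IsSol hm ap an b x) (hb : 0 ≤ b) (hk : ap k * x k = b)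
    {j : Fin m} (hjk : j ≠ k) {t : ℝ} (ht : 0 < t) (htx : t ≤ x j) :
    IsSol hm ap an b (Function.update x j t) := by
  have hmul : ap j * t ≤ b := by
    rcases le_total 0 (ap j) with ha | ha
    · exact (mul_le_mul_of_nonneg_left htx ha).trans (hx.mul_le j)
    · exact (mul_nonpos_of_nonpos_of_nonneg ha ht.le).trans hb
  have hneg : an j * nP t ≤ b := by rwa [nP_of_ne_zero ht.ne', mul_zero]
  refine isSol_of_mul_eq (k := k) ?_ ?_ (by rwa [Function.update_of_ne hjk.symm])
  · exact (Function.forall_update_iff x fun _ s => s ∈ Set.Icc (0 : ℝ) 1).2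
      ⟨⟨ht.le, htx.trans (hx.1 j).2⟩, fun i _ => hx.1 i⟩
  · exact (Function.forall_update_iff x fun i s => ap i * s ≤ b ∧ an i * nP s ≤ b).2
      ⟨⟨hmul, hneg⟩, fun i _ => ⟨hx.mul_le i, hx.mul_nP_le i⟩⟩

lemma eq_single (hx : IsSol hm ap an b x) (hb : 0 < b) (hk : ap k * x k = b)
    (hzero : ∀ j, j ≠ k → x j = 0) : x = Pi.single k (resP b (ap k)) := by
  funext j
  by_cases hj : j = k
  · subst hj
    rw [Pi.single_eq_same, eq_resP_of_mul_eq hb (hx.1 j) hk]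
  · rw [Pi.single_eq_of_ne hj, hzero j hj]

lemma eq_single_of_le (hx : IsSol hm ap an b x) (hb : 0 < b) (hne : ∀ j, an j ≠ b) {c : ℝ}
    (hle : x ≤ Pi.single k c) : x = Pi.single k (resP b (ap k)) := by
  have hzero : ∀ j, j ≠ k → x j = 0 := fun j hj =>
    ((hle j).trans_eq (Pi.single_eq_of_ne (M := fun _ => ℝ) hj c)).antisymm (hx.1 j).1
  obtain ⟨i, hi⟩ := hx.exists_mul_eq hb.ne' hne
  have hik : i = k := by
    by_contra h
    rw [hzero i h, mul_zero] at hi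
    exact hb.ne hi
  exact hx.eq_single hb (hik ▸ hi) hzero

end IsSol

lemma isSol_single (hb : 0 < b) (hk : b ≤ ap k) (han : ∀ j, j ≠ k → an j ≤ b) :
    IsSol hm ap an b (Pi.single k (resP b (ap k))) := by
  have ha : 0 < ap k := hb.trans_le hk
  have hmul : ap k * resP b (ap k) = b := mul_resP_of_le ha hk
  have hne : resP b (ap k) ≠ 0 := right_ne_zero_of_mul (hmul.trans_ne hb.ne')
  refine isSol_of_mul_eq (k := k) (fun j => ?_) (fun j => ?_) (by rwa [Pi.single_eq_same])
  · rcases eq_or_ne j k with rfl | hj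
    · rw [Pi.single_eq_same]
      exact ⟨resP_nonneg hb.le ha.le, resP_le_one _ _⟩
    · rw [Pi.single_eq_of_ne hj]
      exact Set.left_mem_Icc.2 zero_le_one
  · rcases eq_or_ne j k with rfl | hj
    · rw [Pi.single_eq_same, nP_of_ne_zero hne, mul_zero]
      exact ⟨hmul.le, hb.le⟩
    · rw [Pi.single_eq_of_ne hj, nP_zero, mul_zero, mul_one]
      exact ⟨hb.le, han j hj⟩

lemma eq_zero_of_minimal_isSol (hx : Minimal (IsSol hm ap an b) x) (hb : 0 ≤ b)
    (hk : ap k * x k = b) {j : Fin m} (hjk : j ≠ k) : x j = 0 := by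
  by_contra h0
  have hpos : 0 < x j := (hx.prop.1 j).1.lt_of_ne' h0
  exact hx.not_lt
    (hx.prop.update_of_pos_of_le hb hk hjk (half_pos hpos) (half_le_self hpos.le))
    (update_lt_self_iff.2 (half_lt_self hpos))

lemma minimal_isSol_iff (hb : 0 < b) (hne : ∀ j, an j ≠ b) :
    Minimal (IsSol hm ap an b) x ↔
      ∃ k, (b ≤ ap k ∧ ∀ j, j ≠ k → an j < b) ∧ x = Pi.single k (resP b (ap k)) := by
  constructor
  · intro hx
    obtain ⟨k, hk⟩ := hx.prop.exists_mul_eq hb.ne' hne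
    have hzero : ∀ j, j ≠ k → x j = 0 := fun j => eq_zero_of_minimal_isSol hx hb.le hk
    have hlt : ∀ j, j ≠ k → an j < b := fun j hj => (hne j).lt_of_le <| by
      simpa only [hzero j hj, nP_zero, mul_one] using hx.prop.mul_nP_le j
    have hbk : b ≤ ap k := le_of_mul_eq_of_mem_Icc hb (hx.prop.1 k) hk
    exact ⟨k, ⟨hbk, hlt⟩, hx.prop.eq_single hb hk hzero⟩
  · rintro ⟨k, ⟨hk, hlt⟩, rfl⟩
    exact minimal_iff.2 ⟨isSol_single hb hk fun j hj => (hlt j hj).le,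
      fun y hy hle => (hy.eq_single_of_le hb hne hle).symm⟩

end Equation

theorem stmt6_general (m : ℕ) (hm : 0 < m) (ap an : Fin m → ℝ)
    (b : ℝ) (hb0 : 0 < b) (hne : ∀ j, an j ≠ b) :
    {x | IsSol hm ap an b x ∧ ∀ y, IsSol hm ap an b y → ¬ y < x} =
      {x | ∃ k : Fin m, (b ≤ ap k ∧ ∀ j, j ≠ k → an j < b) ∧
        x = fun j => if j = k then resP b (ap k) else (0:ℝ)} := by
  ext x
  have hmin : (IsSol hm ap an b x ∧ ∀ y, IsSol hm ap an b y → ¬ y < x) ↔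
      Minimal (IsSol hm ap an b) x :=
    ⟨fun h => minimal_iff_forall_lt.2 ⟨h.1, fun y hlt hy => h.2 y hy hlt⟩,
      fun h => ⟨h.prop, fun _ => h.not_lt⟩⟩
  have hsingle (k : Fin m) :
      (fun j => if j = k then resP b (ap k) else 0) = Pi.single k (resP b (ap k)) :=
    funext fun j => (Pi.single_apply k (resP b (ap k)) j).symm
  simp only [Set.mem_ofPred_eq, hmin, hsingle, minimal_isSol_iff hb0 hne]

theorem stmt6 (m : ℕ) (hm : 0 < m) (ap an : Fin m → ℝ)
    (hap : ∀ j, ap j ∈ Set.Icc (0:ℝ) 1) (han : ∀ j, an j ∈ Set.Icc (0:ℝ) 1)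
    (b : ℝ) (hb0 : 0 < b) (hb1 : b ≤ 1)
    (hsolv : ∃ x, IsSol hm ap an b x)
    (hne : ∀ j, an j ≠ b) :
    {x | IsSol hm ap an b x ∧ ∀ y, IsSol hm ap an b y → ¬ y < x} =
      {x | ∃ k : Fin m, (b ≤ ap k ∧ ∀ j, j ≠ k → an j < b) ∧
        x = fun j => if j = k then resP b (ap k) else (0:ℝ)} :=
  stmt6_general m hm ap an b hb0 hne
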